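/- Let Λ ⊂ ℝ^n be a full-rank lattice and σ_s > 0. For t ∈ ℝ^n define m(t) = E_{X ~ D_{Λ+t, σ_s}}[‖X‖²]/σ_s² = (Σ_{y ∈ Λ+t} ‖y/σ_s‖² f_{σ_s}(y))/f_{σ_s}(Λ+t). Then for every ε ∈ (0,1), the set {t ∈ ℝ^n : m(t) ≤ (1−ε)n} has measure at most exp(−(ε²/4 + ε³/6)·n) under the Gaussian measure N(0, σ_s² I_n). -/

import Mathlib

open MeasureTheory Real Filter Pointwise
open scoped ENNReal RealInnerProductSpace

noncomputable section

/-- The (continuous) Gaussian density with parameter `σ` on `ℝⁿ`: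
`f_σ(x) = (2πσ²)^{-n/2} exp(-‖x‖²/(2σ²))`. -/
def gaussF (n : ℕ) (σ : ℝ) (x : EuclideanSpace ℝ (Fin n)) : ℝ :=
  (2 * π * σ ^ 2) ^ (-(n : ℝ) / 2) * Real.exp (-‖x‖ ^ 2 / (2 * σ ^ 2))

/-- The Gaussian mass `f_σ(S) = Σ_{y ∈ S} f_σ(y)` of a (countable) set `S ⊆ ℝⁿ`. -/
def gaussMass (n : ℕ) (σ : ℝ) (S : Set (EuclideanSpace ℝ (Fin n))) : ℝ :=
  ∑' y : S, gaussF n σ y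

/-- The Gaussian measure `N(0, σ² Iₙ)` on `ℝⁿ`, given by its density w.r.t. Lebesgue measure. -/
def gaussMeasure (n : ℕ) (σ : ℝ) : Measure (EuclideanSpace ℝ (Fin n)) :=
  volume.withDensity fun x => ENNReal.ofReal (gaussF n σ x)

/-- The coset `S + t` of a set `S ⊆ ℝⁿ`, i.e. `{x | x - t ∈ S}`. -/
def coset (n : ℕ) (S : Set (EuclideanSpace ℝ (Fin n))) (t : EuclideanSpace ℝ (Fin n)) :
    Set (EuclideanSpace ℝ (Fin n)) := {x | x - t ∈ S}

/-- The Voronoi cell of `S`: `{x | ⟪x,y⟫ ≤ ‖y‖²/2 for all y ∈ S}`. -/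
def voronoi (n : ℕ) (S : Set (EuclideanSpace ℝ (Fin n))) : Set (EuclideanSpace ℝ (Fin n)) :=
  {x | ∀ y ∈ S, ⟪x, y⟫ ≤ ‖y‖ ^ 2 / 2}

/-- The inverse error function `err⁻¹_ε(Λ)`: the least `s > 0` such that a standard Gaussian
leaves `s · V(Λ)` with probability at most `ε`. -/
def errInv (n : ℕ) (ε : ℝ) (S : Set (EuclideanSpace ℝ (Fin n))) : ℝ :=
  sInf {s : ℝ | 0 < s ∧ gaussMeasure n 1 ((s • voronoi n S)ᶜ) ≤ ENNReal.ofReal ε}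

/-- The Shannon entropy (in nats) of the discrete Gaussian `D_{S,σ}` supported on `S`,
which assigns mass `f_σ(y)/f_σ(S)` to each `y ∈ S`. -/
def dgEntropy (n : ℕ) (σ : ℝ) (S : Set (EuclideanSpace ℝ (Fin n))) : ℝ :=
  -∑' y : S, (gaussF n σ y / gaussMass n σ S) * Real.log (gaussF n σ y / gaussMass n σ S)

/-- The flatness factor `ε_Λ(σ) = sup_{x ∈ V(Λ)} |V(Λ)·f_σ(Λ+x) − 1|`. -/
def flatness (n : ℕ) (L : Submodule ℤ (EuclideanSpace ℝ (Fin n))) (σ : ℝ) : ℝ :=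
  ⨆ x : voronoi n (L : Set (EuclideanSpace ℝ (Fin n))),
    |ZLattice.covolume L volume *
        gaussMass n σ (coset n (L : Set (EuclideanSpace ℝ (Fin n))) x) - 1|

/-! Draw `t` from `N(0, σ² Iₙ)`. Conditionally on the coset `Λ + t`, the point `t` is distributed
as the discrete Gaussian on that coset, so averaging the discrete Gaussian expectation of `φ ≥ 0`
over `t` gives back the expectation of `φ` under `N(0, σ² Iₙ)`. For `φ = exp (-θ ‖·‖² / σ²)` the
latter is `(1 + 2θ) ^ (-n / 2)`, while Jensen's inequality bounds the discrete Gaussian expectation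
of `φ` from below by `exp (-θ m(t))`. Markov's inequality therefore yields a Chernoff bound for the
lower tail of `m(t)`, and `θ = ε / (2 (1 - ε))` is the optimal parameter at level `(1 - ε) n`. -/

section Periodization

variable {G α : Type*} [AddGroup G] [AddAction G α]

lemma tsum_vadd_vadd {β : Type*} [AddCommMonoid β] [TopologicalSpace β] (f : α → β) (g : G)
    (x : α) : ∑' k : G, f (k +ᵥ (g +ᵥ x)) = ∑' k : G, f (k +ᵥ x) := by
  simpa only [vadd_vadd, Equiv.coe_addRight] using
    (Equiv.addRight g).tsum_eq fun k : G => f (k +ᵥ x)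

variable [Countable G] [MeasurableSpace α] [MeasurableConstVAdd G α]

lemma measurable_tsum_vadd {f : α → ℝ≥0∞} (hf : Measurable f) :
    Measurable fun x => ∑' g : G, f (g +ᵥ x) :=
  Measurable.tsum fun g => hf.comp (measurable_const_vadd g)

variable {μ : Measure α} [VAddInvariantMeasure G α μ] {f h : α → ℝ≥0∞}

variable (G) in
lemma lintegral_mul_tsum_vadd_comm (hf : Measurable f) (hh : Measurable h) :
    ∫⁻ x, f x * ∑' g : G, h (g +ᵥ x) ∂μ = ∫⁻ x, h x * ∑' g : G, f (g +ᵥ x) ∂μ := by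
  have translate (g : G) : ∫⁻ x, f x * h (g +ᵥ x) ∂μ = ∫⁻ x, h x * f (-g +ᵥ x) ∂μ := by
    simpa only [neg_vadd_vadd, mul_comm] using (measurePreserving_vadd g μ).lintegral_comp
      (f := fun x => h x * f (-g +ᵥ x)) (by fun_prop)
  simp only [← ENNReal.tsum_mul_left]
  rw [lintegral_tsum fun g => by fun_prop, lintegral_tsum fun g => by fun_prop]
  simp only [translate]
  exact (Equiv.neg G).tsum_eq fun g => ∫⁻ x, h x * f (g +ᵥ x) ∂μ

variable (G) in
/-- The tower property `E[E[φ | orbit]] = E[φ]` for the density `f` and `h = φ f`. It is only an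
inequality because orbits on which `f` sums to `0` or `∞` do not contribute to the left side. -/
lemma lintegral_mul_tsum_vadd_div_tsum_vadd_le (hf : Measurable f) (hh : Measurable h) :
    ∫⁻ x, f x * ((∑' g : G, h (g +ᵥ x)) / ∑' g : G, f (g +ᵥ x)) ∂μ ≤ ∫⁻ x, h x ∂μ := by
  let F : α → ℝ≥0∞ := fun x => ∑' g : G, f (g +ᵥ x)
  have hF : Measurable F := measurable_tsum_vadd hf
  calc ∫⁻ x, f x * ((∑' g : G, h (g +ᵥ x)) / F x) ∂μ
      = ∫⁻ x, f x / F x * ∑' g : G, h (g +ᵥ x) ∂μ := by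
        simp only [div_eq_mul_inv, mul_assoc, mul_comm]
    _ = ∫⁻ x, h x * ∑' g : G, f (g +ᵥ x) / F (g +ᵥ x) ∂μ :=
        lintegral_mul_tsum_vadd_comm G (hf.div hF) hh
    _ = ∫⁻ x, h x * (F x / F x) ∂μ := by
        simp only [F, tsum_vadd_vadd, div_eq_mul_inv, ENNReal.tsum_mul_right]
    _ ≤ ∫⁻ x, h x ∂μ :=
        lintegral_mono fun x => mul_le_of_le_one_right' ENNReal.div_self_le_one

end Periodization

section Jensen

variable {ι E : Type*} [AddCommGroup E] [Module ℝ E] [TopologicalSpace E] [ContinuousSMul ℝ E]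

lemma convexOn_map_inv_smul_le_of_hasSum {φ : E → ℝ} (hφ : ConvexOn ℝ Set.univ φ)
    (hφc : Continuous φ) {w : ι → ℝ} {x : ι → E} {W Y : ℝ} {X : E} (hw : ∀ i, 0 ≤ w i)
    (hW : 0 < W) (hsw : HasSum w W) (hsx : HasSum (fun i => w i • x i) X)
    (hsφ : HasSum (fun i => w i * φ (x i)) Y) : φ (W⁻¹ • X) ≤ W⁻¹ * Y := by
  have hinv : Tendsto (fun s : Finset ι => (∑ i ∈ s, w i)⁻¹) atTop (nhds W⁻¹) :=
    Tendsto.inv₀ hsw hW.ne'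
  have hleft : Tendsto (fun s : Finset ι => φ (s.centerMass w x)) atTop (nhds (φ (W⁻¹ • X))) :=
    (hφc.tendsto _).comp (hinv.smul hsx)
  refine le_of_tendsto_of_tendsto hleft (hinv.mul hsφ) ?_
  filter_upwards [hsw.eventually_const_lt hW] with s hs
  exact hφ.map_centerMass_le (fun i _ => hw i) hs fun _ _ => Set.mem_univ _

end Jensen

section SubmoduleAction

variable {R E : Type*} [Ring R] [AddCommGroup E] [Module R E] [MeasurableSpace E]
  (L : Submodule R E)

instance [MeasurableConstVAdd E E] : MeasurableConstVAdd L E :=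
  inferInstanceAs <| MeasurableConstVAdd L.toAddSubgroup E

instance (μ : Measure E) [μ.IsAddLeftInvariant] : VAddInvariantMeasure L E μ :=
  inferInstanceAs <| VAddInvariantMeasure L.toAddSubgroup E μ

end SubmoduleAction

section Summability

variable {E : Type*} [NormedAddCommGroup E] [NormedSpace ℝ E] [FiniteDimensional ℝ E]
  (L : Submodule ℤ E) [DiscreteTopology L]

lemma tendsto_norm_coe_add_cofinite (t : E) :
    Tendsto (fun l : L => ‖(l : E) + t‖) cofinite atTop := by
  have hL : Tendsto ((↑) : L → E) cofinite (cocompact E) :=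
    L.toAddSubgroup.tendsto_coe_cofinite_of_discrete ⟨‹DiscreteTopology L›⟩
  exact (tendsto_norm_cocompact_atTop.comp
    (Homeomorph.addRight t).isClosedEmbedding.tendsto_cocompact).comp hL

lemma summable_comp_norm_coe_add {u : ℝ → ℝ} (hu : ∀ r : ℝ, u =O[atTop] fun x => x ^ r) (t : E) :
    Summable fun l : L => u ‖(l : E) + t‖ := by
  have hpow := ZLattice.summable_norm_sub_rpow L (-Module.finrank ℤ L - 1) (by linarith) (-t)
  simp only [sub_neg_eq_add] at hpow
  exact summable_of_isBigO hpow ((hu _).comp_tendsto (tendsto_norm_coe_add_cofinite L t))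

lemma summable_norm_pow_mul_exp_neg_mul_norm_sq {b : ℝ} (hb : 0 < b) (k : ℕ) (t : E) :
    Summable fun l : L => ‖(l : E) + t‖ ^ k * Real.exp (-b * ‖(l : E) + t‖ ^ 2) := by
  refine summable_comp_norm_coe_add L (u := fun x => x ^ k * Real.exp (-b * x ^ 2))
    (fun r => ?_) t
  have hexp := rpow_mul_exp_neg_mul_sq_isLittleO_exp_neg hb k
  simp only [Real.rpow_natCast] at hexp
  exact (hexp.trans (isLittleO_exp_neg_mul_rpow_atTop one_half_pos r)).isBigO

end Summability

section GaussianIntegral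

variable (V : Type*) [NormedAddCommGroup V] [InnerProductSpace ℝ V] [FiniteDimensional ℝ V]
  [MeasurableSpace V] [BorelSpace V]

lemma lintegral_exp_neg_mul_norm_sq {b : ℝ} (hb : 0 < b) :
    ∫⁻ x : V, ENNReal.ofReal (Real.exp (-b * ‖x‖ ^ 2))
      = ENNReal.ofReal ((π / b) ^ (Module.finrank ℝ V / 2 : ℝ)) := by
  have hint := GaussianFourier.integral_rexp_neg_mul_sq_norm (V := V) hb
  rw [← hint, ofReal_integral_eq_lintegral_ofReal]
  · exact .of_integral_ne_zero (by rw [hint]; positivity)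
  · exact .of_forall fun x => (Real.exp_pos _).le

end GaussianIntegral

section GaussianDensity

variable {n : ℕ} {σ : ℝ}

lemma gaussF_pos (hσ : σ ≠ 0) (x : EuclideanSpace ℝ (Fin n)) : 0 < gaussF n σ x := by
  unfold gaussF
  positivity

lemma measurable_gaussF : Measurable (gaussF n σ) := by
  unfold gaussF
  fun_prop

lemma exp_neg_mul_gaussF (θ : ℝ) (x : EuclideanSpace ℝ (Fin n)) :
    Real.exp (-θ * (‖x‖ ^ 2 / σ ^ 2)) * gaussF n σ x
      = (2 * π * σ ^ 2) ^ (-(n : ℝ) / 2)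
        * Real.exp (-((1 + 2 * θ) / (2 * σ ^ 2)) * ‖x‖ ^ 2) := by
  rw [gaussF, mul_left_comm, ← Real.exp_add]
  congr 2
  ring

lemma lintegral_gaussMeasure {φ : EuclideanSpace ℝ (Fin n) → ℝ≥0∞} (hφ : Measurable φ) :
    ∫⁻ x, φ x ∂gaussMeasure n σ = ∫⁻ x, ENNReal.ofReal (gaussF n σ x) * φ x :=
  lintegral_withDensity_eq_lintegral_mul _ measurable_gaussF.ennreal_ofReal hφ

lemma lintegral_exp_neg_mul_norm_sq_gaussMeasure (hσ : σ ≠ 0) {θ : ℝ} (hθ : -(1 / 2) < θ) :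
    ∫⁻ x, ENNReal.ofReal (Real.exp (-θ * (‖x‖ ^ 2 / σ ^ 2))) ∂gaussMeasure n σ
      = ENNReal.ofReal ((1 + 2 * θ) ^ (-(n : ℝ) / 2)) := by
  have hθ' : 0 < 1 + 2 * θ := by linarith
  have hσ' : 0 < 2 * π * σ ^ 2 := by positivity
  have hc : 0 ≤ (2 * π * σ ^ 2) ^ (-(n : ℝ) / 2) := by positivity
  have hratio : π / ((1 + 2 * θ) / (2 * σ ^ 2)) = (2 * π * σ ^ 2) * (1 + 2 * θ)⁻¹ := by
    field_simp
  rw [lintegral_gaussMeasure (by fun_prop)]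
  simp only [mul_comm (ENNReal.ofReal (gaussF n σ _)), ← ENNReal.ofReal_mul (Real.exp_nonneg _),
    exp_neg_mul_gaussF, ENNReal.ofReal_mul hc]
  rw [lintegral_const_mul _ (by fun_prop), lintegral_exp_neg_mul_norm_sq _ (by positivity),
    ← ENNReal.ofReal_mul hc, finrank_euclideanSpace_fin, hratio,
    Real.mul_rpow hσ'.le (by positivity), ← mul_assoc, ← Real.rpow_add hσ',
    Real.inv_rpow hθ'.le, ← Real.rpow_neg hθ'.le, neg_div, neg_add_cancel, Real.rpow_zero, one_mul]

end GaussianDensity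

/-- The expectation `E_{X ~ D_{S,σ}}[φ(X)]` under the discrete Gaussian supported on `S`. It carries
its meaning only if `f_σ` and `φ f_σ` are summable over `S`. -/
def dgMean (n : ℕ) (σ : ℝ) (S : Set (EuclideanSpace ℝ (Fin n)))
    (φ : EuclideanSpace ℝ (Fin n) → ℝ) : ℝ :=
  (∑' y : S, φ y * gaussF n σ y) / gaussMass n σ S

section DiscreteGaussian

variable {n : ℕ} {σ : ℝ} (L : Submodule ℤ (EuclideanSpace ℝ (Fin n)))

lemma tsum_coset (u : EuclideanSpace ℝ (Fin n) → ℝ) (t : EuclideanSpace ℝ (Fin n)) :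
    ∑' y : coset n (L : Set (EuclideanSpace ℝ (Fin n))) t, u y = ∑' l : L, u (l + t) :=
  ((Equiv.addRight t).subtypeEquiv (p := (· ∈ L)) (q := (· ∈ coset n (L : Set _) t))
    fun l => by simp [coset]).tsum_eq (fun y => u y) |>.symm

lemma dgMean_coset (φ : EuclideanSpace ℝ (Fin n) → ℝ) (t : EuclideanSpace ℝ (Fin n)) :
    dgMean n σ (coset n L t) φ
      = (∑' l : L, φ (l + t) * gaussF n σ (l + t)) / ∑' l : L, gaussF n σ (l + t) := by
  rw [dgMean, gaussMass, tsum_coset L (gaussF n σ), tsum_coset L fun y => φ y * gaussF n σ y]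

variable [DiscreteTopology L]

lemma summable_exp_neg_mul_gaussF (hσ : σ ≠ 0) {θ : ℝ} (hθ : -(1 / 2) < θ)
    (t : EuclideanSpace ℝ (Fin n)) :
    Summable fun l : L =>
      Real.exp (-θ * (‖(l : EuclideanSpace ℝ (Fin n)) + t‖ ^ 2 / σ ^ 2)) * gaussF n σ (l + t) := by
  have hb : 0 < (1 + 2 * θ) / (2 * σ ^ 2) := div_pos (by linarith) (by positivity)
  simp only [exp_neg_mul_gaussF]
  simpa using (summable_norm_pow_mul_exp_neg_mul_norm_sq L hb 0 t).mul_left _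

lemma summable_gaussF (hσ : σ ≠ 0) (t : EuclideanSpace ℝ (Fin n)) :
    Summable fun l : L => gaussF n σ (l + t) := by
  simpa using summable_exp_neg_mul_gaussF L hσ (θ := 0) (by norm_num) t

lemma summable_norm_sq_mul_gaussF (hσ : σ ≠ 0) (t : EuclideanSpace ℝ (Fin n)) :
    Summable fun l : L =>
      ‖(l : EuclideanSpace ℝ (Fin n)) + t‖ ^ 2 / σ ^ 2 * gaussF n σ (l + t) := by
  have hb : 0 < 1 / (2 * σ ^ 2) := by positivity
  refine ((summable_norm_pow_mul_exp_neg_mul_norm_sq L hb 2 t).mul_left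
    ((2 * π * σ ^ 2) ^ (-(n : ℝ) / 2) / σ ^ 2)).congr fun l => ?_
  have hexponent : -(1 / (2 * σ ^ 2)) * ‖(l : EuclideanSpace ℝ (Fin n)) + t‖ ^ 2
      = -‖(l : EuclideanSpace ℝ (Fin n)) + t‖ ^ 2 / (2 * σ ^ 2) := by ring
  rw [gaussF, hexponent]
  ring

lemma tsum_gaussF_pos (hσ : σ ≠ 0) (t : EuclideanSpace ℝ (Fin n)) :
    0 < ∑' l : L, gaussF n σ (l + t) :=
  (summable_gaussF L hσ t).tsum_pos (fun _ => (gaussF_pos hσ _).le) 0 (gaussF_pos hσ _)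

lemma exp_neg_mul_dgMean_le_dgMean_exp (hσ : σ ≠ 0) {θ : ℝ} (hθ : -(1 / 2) < θ)
    (t : EuclideanSpace ℝ (Fin n)) :
    Real.exp (-θ * dgMean n σ (coset n L t) fun y => ‖y‖ ^ 2 / σ ^ 2)
      ≤ dgMean n σ (coset n L t) fun y => Real.exp (-θ * (‖y‖ ^ 2 / σ ^ 2)) := by
  have hconv : ConvexOn ℝ Set.univ fun x : ℝ => Real.exp (-θ * x) :=
    convexOn_exp.comp_linearMap (LinearMap.mulLeft ℝ (-θ))
  have hpower := (summable_norm_sq_mul_gaussF L hσ t).hasSum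
  have hexp := (summable_exp_neg_mul_gaussF L hσ hθ t).hasSum
  have hjensen := convexOn_map_inv_smul_le_of_hasSum hconv (by fun_prop)
    (fun l : L => (gaussF_pos hσ ((l : EuclideanSpace ℝ (Fin n)) + t)).le) (tsum_gaussF_pos L hσ t)
    (summable_gaussF L hσ t).hasSum
    (by simpa only [smul_eq_mul, mul_comm (gaussF n σ _)] using hpower)
    (by simpa only [mul_comm (gaussF n σ _)] using hexp)
  simpa only [dgMean_coset, div_eq_inv_mul, smul_eq_mul] using hjensen

variable {φ : EuclideanSpace ℝ (Fin n) → ℝ}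

lemma ofReal_dgMean_coset (hσ : σ ≠ 0) (hφ : ∀ x, 0 ≤ φ x) {t : EuclideanSpace ℝ (Fin n)}
    (hs : Summable fun l : L => φ (l + t) * gaussF n σ (l + t)) :
    ENNReal.ofReal (dgMean n σ (coset n L t) φ)
      = (∑' l : L, ENNReal.ofReal (φ (l +ᵥ t) * gaussF n σ (l +ᵥ t)))
        / ∑' l : L, ENNReal.ofReal (gaussF n σ (l +ᵥ t)) := by
  rw [dgMean_coset, ENNReal.ofReal_div_of_pos (tsum_gaussF_pos L hσ t),
    ENNReal.ofReal_tsum_of_nonneg (fun l => mul_nonneg (hφ _) (gaussF_pos hσ _).le) hs,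
    ENNReal.ofReal_tsum_of_nonneg (fun l => (gaussF_pos hσ _).le) (summable_gaussF L hσ t)]
  rfl

lemma measurable_ofReal_dgMean_coset (hσ : σ ≠ 0) (hφm : Measurable φ) (hφ : ∀ x, 0 ≤ φ x)
    (hs : ∀ t, Summable fun l : L => φ (l + t) * gaussF n σ (l + t)) :
    Measurable fun t => ENNReal.ofReal (dgMean n σ (coset n L t) φ) := by
  have : Countable L := countable_of_Lindelof_of_discrete
  simp only [ofReal_dgMean_coset L hσ hφ (hs _)]
  exact (measurable_tsum_vadd (hφm.mul measurable_gaussF).ennreal_ofReal).div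
    (measurable_tsum_vadd measurable_gaussF.ennreal_ofReal)

lemma lintegral_dgMean_coset_le (hσ : σ ≠ 0) (hφm : Measurable φ) (hφ : ∀ x, 0 ≤ φ x)
    (hs : ∀ t, Summable fun l : L => φ (l + t) * gaussF n σ (l + t)) :
    ∫⁻ t, ENNReal.ofReal (dgMean n σ (coset n L t) φ) ∂gaussMeasure n σ
      ≤ ∫⁻ x, ENNReal.ofReal (φ x) ∂gaussMeasure n σ := by
  have : Countable L := countable_of_Lindelof_of_discrete
  rw [lintegral_gaussMeasure (measurable_ofReal_dgMean_coset L hσ hφm hφ hs),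
    lintegral_gaussMeasure hφm.ennreal_ofReal]
  simp only [ofReal_dgMean_coset L hσ hφ (hs _), mul_comm (ENNReal.ofReal (gaussF n σ _))
    (ENNReal.ofReal (φ _)), ← ENNReal.ofReal_mul (hφ _)]
  exact lintegral_mul_tsum_vadd_div_tsum_vadd_le L measurable_gaussF.ennreal_ofReal
    (hφm.mul measurable_gaussF).ennreal_ofReal

lemma gaussMeasure_dgMean_norm_sq_le (hσ : σ ≠ 0) {θ : ℝ} (hθ : 0 ≤ θ) (M : ℝ) :
    gaussMeasure n σ {t | dgMean n σ (coset n L t) (fun y => ‖y‖ ^ 2 / σ ^ 2) ≤ M}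
      ≤ ENNReal.ofReal (Real.exp (θ * M) * (1 + 2 * θ) ^ (-(n : ℝ) / 2)) := by
  have hθ' : -(1 / 2) < θ := by linarith
  let φ : EuclideanSpace ℝ (Fin n) → ℝ := fun y => Real.exp (-θ * (‖y‖ ^ 2 / σ ^ 2))
  have hφm : Measurable φ := by fun_prop
  have hφ (x) : 0 ≤ φ x := Real.exp_nonneg _
  have hs := summable_exp_neg_mul_gaussF L hσ hθ'
  have hjensen : {t | dgMean n σ (coset n L t) (fun y => ‖y‖ ^ 2 / σ ^ 2) ≤ M} ⊆
      {t | ENNReal.ofReal (Real.exp (-θ * M)) ≤ ENNReal.ofReal (dgMean n σ (coset n L t) φ)} :=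
    fun t ht => ENNReal.ofReal_le_ofReal <|
      (Real.exp_le_exp.2 (mul_le_mul_of_nonpos_left ht (neg_nonpos.2 hθ))).trans
        (exp_neg_mul_dgMean_le_dgMean_exp L hσ hθ' t)
  calc gaussMeasure n σ {t | dgMean n σ (coset n L t) (fun y => ‖y‖ ^ 2 / σ ^ 2) ≤ M}
      ≤ (∫⁻ t, ENNReal.ofReal (dgMean n σ (coset n L t) φ) ∂gaussMeasure n σ)
          / ENNReal.ofReal (Real.exp (-θ * M)) :=
        (measure_mono hjensen).trans <| meas_ge_le_lintegral_div
          (measurable_ofReal_dgMean_coset L hσ hφm hφ hs).aemeasurable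
          (ENNReal.ofReal_pos.2 (Real.exp_pos _)).ne' ENNReal.ofReal_ne_top
    _ ≤ ENNReal.ofReal ((1 + 2 * θ) ^ (-(n : ℝ) / 2)) / ENNReal.ofReal (Real.exp (-θ * M)) := by
        gcongr
        exact (lintegral_dgMean_coset_le L hσ hφm hφ hs).trans_eq
          (lintegral_exp_neg_mul_norm_sq_gaussMeasure hσ hθ')
    _ = ENNReal.ofReal (Real.exp (θ * M) * (1 + 2 * θ) ^ (-(n : ℝ) / 2)) := by
        rw [← ENNReal.ofReal_div_of_pos (Real.exp_pos _), neg_mul, Real.exp_neg, div_inv_eq_mul,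
          mul_comm]

end DiscreteGaussian

lemma log_one_sub_le_neg_sum_range {x : ℝ} (hx0 : 0 ≤ x) (hx1 : x < 1) (N : ℕ) :
    Real.log (1 - x) ≤ -∑ i ∈ Finset.range N, x ^ (i + 1) / (i + 1) := by
  have hsum := Real.hasSum_pow_div_log_of_abs_lt_one ((abs_of_nonneg hx0).trans_lt hx1)
  exact le_neg_of_le_neg (sum_le_hasSum _ (fun i _ => by positivity) hsum)

theorem power_lower_tail_general (n : ℕ) (L : Submodule ℤ (EuclideanSpace ℝ (Fin n)))
    [DiscreteTopology L] (σs : ℝ) (hσs : σs ≠ 0) (ε : ℝ) (hε0 : 0 ≤ ε) (hε1 : ε < 1) :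
    gaussMeasure n σs {t : EuclideanSpace ℝ (Fin n) |
      dgMean n σs (coset n L t) (fun y => ‖y‖ ^ 2 / σs ^ 2) ≤ (1 - ε) * n}
      ≤ ENNReal.ofReal (Real.exp (-(ε ^ 2 / 4 + ε ^ 3 / 6) * n)) := by
  have hε : 0 < 1 - ε := by linarith
  refine (gaussMeasure_dgMean_norm_sq_le L hσs (θ := ε / (2 * (1 - ε))) (by positivity) _).trans
    (ENNReal.ofReal_le_ofReal ?_)
  have hbase : 1 + 2 * (ε / (2 * (1 - ε))) = (1 - ε)⁻¹ := by
    field_simp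
    ring
  have hexponent : ε / (2 * (1 - ε)) * ((1 - ε) * n) = ε / 2 * n := by
    field_simp
  rw [hbase, hexponent, Real.rpow_def_of_pos (by positivity), Real.log_inv, ← Real.exp_add,
    Real.exp_le_exp]
  have hlog : Real.log (1 - ε) ≤ -(ε + ε ^ 2 / 2 + ε ^ 3 / 3) := by
    convert log_one_sub_le_neg_sum_range hε0 hε1 3 using 2
    norm_num [Finset.sum_range_succ]
  linarith [mul_le_mul_of_nonneg_right hlog n.cast_nonneg]

/-- lower tail bound for the normalized expected power
`m(t) = E_{X ~ D_{Λ+t,σ_s}}[‖X‖²]/σ_s²` of the dithered discrete Gaussian. -/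
theorem power_lower_tail (n : ℕ) (L : Submodule ℤ (EuclideanSpace ℝ (Fin n)))
    [DiscreteTopology L] [IsZLattice ℝ L]
    (σs : ℝ) (hσs : 0 < σs) (ε : ℝ) (hε0 : 0 < ε) (hε1 : ε < 1) :
    gaussMeasure n σs {t : EuclideanSpace ℝ (Fin n) |
      (∑' y : coset n (L : Set (EuclideanSpace ℝ (Fin n))) t,
            (‖(y : EuclideanSpace ℝ (Fin n))‖ ^ 2 / σs ^ 2) * gaussF n σs y) /
          gaussMass n σs (coset n (L : Set (EuclideanSpace ℝ (Fin n))) t) ≤ (1 - ε) * n}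
      ≤ ENNReal.ofReal (Real.exp (-(ε ^ 2 / 4 + ε ^ 3 / 6) * n)) := by
  exact power_lower_tail_general n L σs hσs.ne' ε hε0.le hε1
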